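/- Let G be a finite simple graph, d : ∫G^op → FinSet a structured co-decomposition, and e an edge of G. Then d and Filter(d,e) have the same image diagram: for every object z of ∫G (vertex or edge), the set-theoretic image of the limit projection lim Filter(d,e) → Filter(d,e)(z) coincides, as a subset of d(z), with the set-theoretic image of the limit projection lim d → d(z). -/

import Mathlib

open CategoryTheory CategoryTheory.Limits Opposite

variable {V : Type}

/-- Objects of the barycentric subdivision `∫G` of a simple graph `G`:
vertices and edges of `G`. -/
def BarySub (G : SimpleGraph V) : Type := V ⊕ G.edgeSet

/-- The preorder on `∫G`: besides reflexivity, `e ≤ x` precisely when the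
edge `e` is incident with the vertex `x`. -/
instance BarySub.instPreorder (G : SimpleGraph V) : Preorder (BarySub G) where
  le a b := a = b ∨ ∃ (e : G.edgeSet) (x : V), a = Sum.inr e ∧ b = Sum.inl x ∧ x ∈ (e : Sym2 V)
  le_refl a := Or.inl rfl
  le_trans a b c h₁ h₂ := by
    rcases h₁ with rfl | ⟨e, x, rfl, rfl, hx⟩
    · exact h₂
    · rcases h₂ with rfl | ⟨e', x', h, _, _⟩
      · exact Or.inr ⟨e, x, rfl, rfl, hx⟩
      · simp at h

/-- The object of `(∫G)ᵒᵖ` corresponding to a vertex `t` of `G`. -/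
def vtx (G : SimpleGraph V) (t : V) : (BarySub G)ᵒᵖ := op (Sum.inl t)

/-- The object of `(∫G)ᵒᵖ` corresponding to an edge `e` of `G`. -/
def edg (G : SimpleGraph V) (e : G.edgeSet) : (BarySub G)ᵒᵖ := op (Sum.inr e)

/-- The morphism `x → e` of `(∫G)ᵒᵖ` for `x` a vertex incident with the edge `e`. -/
def inc (G : SimpleGraph V) (e : G.edgeSet) (t : V) (ht : t ∈ (e : Sym2 V)) :
    vtx G t ⟶ edg G e :=
  (homOfLE (Or.inr ⟨e, t, rfl, rfl, ht⟩)).op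

/-- Any two parallel morphisms in `(∫G)ᵒᵖ` agree (it is a poset). -/
lemma baryHom_ext {G : SimpleGraph V} {U W : (BarySub G)ᵒᵖ} (i j : U ⟶ W) : i = j :=
  Quiver.Hom.unop_inj (Subsingleton.elim _ _)

/-- The only morphisms of `(∫G)ᵒᵖ` into a vertex object are identities. -/
lemma eq_vtx_of_hom {G : SimpleGraph V} {U : (BarySub G)ᵒᵖ} {t : V} (i : U ⟶ vtx G t) :
    U = vtx G t := by
  have h := (Quiver.Hom.unop i).le
  rcases h with h | ⟨e, x, h, _, _⟩
  · exact unop_injective h.symm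
  · simp [vtx] at h

/-- A global matching family for `d : (∫G)ᵒᵖ ⥤ Type`: a choice of `a t ∈ d t` for every
vertex `t` such that for every edge `e = xy` we have `d(e_x)(a x) = d(e_y)(a y)`. -/
def IsMatchingFamily (G : SimpleGraph V) (d : (BarySub G)ᵒᵖ ⥤ Type)
    (a : ∀ t : V, d.obj (vtx G t)) : Prop :=
  ∀ (e : G.edgeSet) (x : V) (hx : x ∈ (e : Sym2 V)) (y : V) (hy : y ∈ (e : Sym2 V)),
    d.map (inc G e x hx) (a x) = d.map (inc G e y hy) (a y)
open CategoryTheory.GrothendieckTopology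

/-- The edge `s(x,y)` of `G` as an element of `G.edgeSet`. -/
def edgeOf (G : SimpleGraph V) {x y : V} (h : G.Adj x y) : G.edgeSet :=
  ⟨s(x, y), G.mem_edgeSet.mpr h⟩

/-- `Filter(d, e)` for the edge `e = xy`: the subfunctor of `d` given at `x` by
`{a ∈ d(x) | ∃ b ∈ d(y), d(e_x)(a) = d(e_y)(b)}`, at `y` by
`{b ∈ d(y) | ∃ a ∈ d(x), d(e_x)(a) = d(e_y)(b)}`, at `e` by
`{c ∈ d(e) | ∃ a b, d(e_x)(a) = c = d(e_y)(b)}`, and by `d(z)` at every other object. -/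
def filterSub (G : SimpleGraph V) (d : (BarySub G)ᵒᵖ ⥤ Type) (x y : V) (h : G.Adj x y) :
    Subfunctor d where
  obj z := {c |
    (∀ hz : z = vtx G x, ∃ b : d.obj (vtx G y),
      d.map (inc G (edgeOf G h) x (Sym2.mem_mk_left x y)) (hz ▸ c)
        = d.map (inc G (edgeOf G h) y (Sym2.mem_mk_right x y)) b) ∧
    (∀ hz : z = vtx G y, ∃ a : d.obj (vtx G x),
      d.map (inc G (edgeOf G h) x (Sym2.mem_mk_left x y)) a
        = d.map (inc G (edgeOf G h) y (Sym2.mem_mk_right x y)) (hz ▸ c)) ∧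
    (∀ hz : z = edg G (edgeOf G h),
      (∃ a : d.obj (vtx G x),
        d.map (inc G (edgeOf G h) x (Sym2.mem_mk_left x y)) a = hz ▸ c) ∧
      (∃ b : d.obj (vtx G y),
        d.map (inc G (edgeOf G h) y (Sym2.mem_mk_right x y)) b = hz ▸ c))}
  map := by
    rintro U W i c hc
    refine ⟨?_, ?_, ?_⟩
    · rintro rfl
      obtain rfl : U = vtx G x := eq_vtx_of_hom i
      rw [baryHom_ext i (𝟙 _)]
      simpa using hc.1 rfl
    · rintro rfl
      obtain rfl : U = vtx G y := eq_vtx_of_hom i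
      rw [baryHom_ext i (𝟙 _)]
      simpa using hc.2.1 rfl
    · rintro rfl
      rcases (Quiver.Hom.unop i).le with hU | ⟨e', x', hEq, hUx, hx'⟩
      · obtain rfl : U = edg G (edgeOf G h) := unop_injective hU.symm
        rw [baryHom_ext i (𝟙 _)]
        simpa using hc.2.2 rfl
      · obtain rfl : e' = edgeOf G h := by
          have := hEq
          simp only [edg] at this
          exact (Sum.inr.injEq _ _ ▸ this).symm
        rcases Sym2.mem_iff.mp hx' with rfl | rfl
        · obtain rfl : U = vtx G x' := unop_injective hUx
          rw [baryHom_ext i (inc G (edgeOf G h) x' (Sym2.mem_mk_left x' y))]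
          obtain ⟨b, hb⟩ := hc.1 rfl
          exact ⟨⟨c, rfl⟩, ⟨b, hb.symm⟩⟩
        · obtain rfl : U = vtx G x' := unop_injective hUx
          rw [baryHom_ext i (inc G (edgeOf G h) x' (Sym2.mem_mk_right x x'))]
          obtain ⟨a, ha⟩ := hc.2.1 rfl
          exact ⟨⟨a, ha⟩, ⟨c, rfl⟩⟩

/-!
Every element in the image of `lim d` extends to a global matching family, whose entries at the two
endpoints of an edge witness each other's survival under filtering at that edge. So `Filter(d, e)`
contains the image diagram of `d`. Any subfunctor `S` of `d` with this property has the same image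
diagram as `d`: the limit cone of `d` factors through `S`, hence through `lim S`, while the limit
cone of `S` is itself a cone over `d`.
-/

section ImageDiagram

universe w v u

variable {J : Type u} [Category.{v} J] {F : J ⥤ Type w}

lemma range_π_le_of_isLimit {c : Cone F} (hc : IsLimit c) (s : Cone F) :
    Subfunctor.range s.π ≤ Subfunctor.range c.π := by
  rintro j _ ⟨a, rfl⟩
  exact ⟨hc.lift s a, ConcreteCategory.congr_hom (hc.fac s j) a⟩

/-- The image diagram of a type-valued functor `F`: the subfunctor whose value at `j` is the image
of the limit projection `lim F ⟶ F.obj j`. -/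
noncomputable def imageDiagram (F : J ⥤ Type w) [HasLimit F] : Subfunctor F :=
  Subfunctor.range (limit.cone F).π

lemma range_π_le_imageDiagram [HasLimit F] (s : Cone F) :
    Subfunctor.range s.π ≤ imageDiagram F :=
  range_π_le_of_isLimit (limit.isLimit F) s

lemma image_ι_imageDiagram_le (S : Subfunctor F) [HasLimit F] [HasLimit S.toFunctor] :
    (imageDiagram S.toFunctor).image S.ι ≤ imageDiagram F := by
  rw [imageDiagram, ← Subfunctor.range_comp]
  exact range_π_le_imageDiagram ((Cone.postcompose S.ι).obj (limit.cone S.toFunctor))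

lemma image_ι_imageDiagram_eq {S : Subfunctor F} [HasLimit F] [HasLimit S.toFunctor]
    (hS : imageDiagram F ≤ S) :
    (imageDiagram S.toFunctor).image S.ι = imageDiagram F := by
  refine (image_ι_imageDiagram_le S).antisymm ?_
  let liftedCone : Cone S.toFunctor := ⟨limit F, Subfunctor.lift (limit.cone F).π hS⟩
  calc
    imageDiagram F = (Subfunctor.range liftedCone.π).image S.ι :=
      Subfunctor.range_comp liftedCone.π S.ι
    _ ≤ (imageDiagram S.toFunctor).image S.ι :=
      fun j => Set.image_mono (range_π_le_imageDiagram liftedCone j)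

end ImageDiagram

lemma range_π_le_filterSub {G : SimpleGraph V} {d : (BarySub G)ᵒᵖ ⥤ Type} (c : Cone d) {x y : V}
    (h : G.Adj x y) : Subfunctor.range c.π ≤ filterSub G d x y h := by
  rintro z _ ⟨a, rfl⟩
  have map_π {U W : (BarySub G)ᵒᵖ} (i : U ⟶ W) : d.map i (c.π.app U a) = c.π.app W a :=
    ConcreteCategory.congr_hom (c.w i) a
  refine ⟨?_, ?_, ?_⟩
  · rintro rfl
    exact ⟨c.π.app (vtx G y) a, (map_π _).trans (map_π _).symm⟩
  · rintro rfl
    exact ⟨c.π.app (vtx G x) a, (map_π _).trans (map_π _).symm⟩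
  · rintro rfl
    exact ⟨⟨c.π.app (vtx G x) a, map_π _⟩, ⟨c.π.app (vtx G y) a, map_π _⟩⟩

theorem stmt_6_general (G : SimpleGraph V) (d : (BarySub G)ᵒᵖ ⥤ Type) (x y : V) (h : G.Adj x y) :
    (imageDiagram (filterSub G d x y h).toFunctor).image (filterSub G d x y h).ι =
      imageDiagram d :=
  image_ι_imageDiagram_eq (range_π_le_filterSub (limit.cone d) h)

/-- `d` and `Filter(d,e)` have the same image diagram: at every object `z`
of `∫G`, the set-theoretic image of the limit projection `lim Filter(d,e) → Filter(d,e)(z)`,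
viewed inside `d(z)` via the inclusion, coincides with the image of `lim d → d(z)`. -/
theorem stmt_6 {V : Type} [Fintype V] (G : SimpleGraph V)
    (d : (BarySub G)ᵒᵖ ⥤ Type) [∀ z, Finite (d.obj z)] (x y : V) (h : G.Adj x y) :
    ∀ z : (BarySub G)ᵒᵖ,
      (filterSub G d x y h).ι.app z ''
          Set.range (limit.π (filterSub G d x y h).toFunctor z) =
        Set.range (limit.π d z) :=
  fun z => congrArg (Subfunctor.obj · z) (stmt_6_general G d x y h)
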